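/- (Conditional Carathéodory extension theorem.) Let X be a stable set of functions on Ω, 𝒳 a stable ring on X, and μ : 𝒳 → L̄⁰₊ a stable pre-measure. Then there exists a stable measure ν : Σ(𝒳) → L̄⁰₊ on the stable σ-algebra generated by 𝒳 which coincides with μ on 𝒳. -/

import Mathlib

/-!
Common framework for conditional set theory and conditional measure theory
in the sense of Drapeau–Jamneshan–Karliczek–Kupper, specialized to the
measure algebra associated to a probability space `(Ω, F, P)`.

Functions on `Ω` are identified when they agree `P`-a.s., and measurable sets
are identified when their symmetric difference is a null set.  Conditional
subsets of a stable set `X` are represented by raw pairs `(V, A)` consisting of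
a set of functions and a (measurable) base set; all notions are formulated with
respect to the almost-sure identifications via the relations `cle` and `ceq`.
-/

open MeasureTheory Filter Set Topology
open scoped ENNReal

noncomputable section

namespace CondMT

variable {Ω E F' : Type*}

/-- A countable partition of `Ω` into measurable sets (modulo `P`-null sets). -/
structure Partition {Ω : Type*} (mΩ : MeasurableSpace Ω) (P : @Measure Ω mΩ) where
  part : ℕ → Set Ω
  meas : ∀ k, MeasurableSet[mΩ] (part k)
  disj : ∀ i j, i ≠ j → P (part i ∩ part j) = 0
  cover : P ((⋃ k, part k)ᶜ) = 0

variable {mΩ : MeasurableSpace Ω}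

open Classical in
/-- The concatenation `∑ x_k|A_k` of a sequence of functions along a partition:
the (a.s. unique) function equal to `x_k` on `A_k` for every `k`. -/
def Partition.concat {P : @Measure Ω mΩ} (A : Partition mΩ P) (x : ℕ → Ω → E) : Ω → E :=
  fun ω => if h : ∃ k, ω ∈ A.part k then x (Nat.find h) ω else x 0 ω

/-- A stable set of functions on `Ω`: nonempty, closed under a.s. modification and
closed under countable concatenations along partitions. -/
def Stable (P : @Measure Ω mΩ) (X : Set (Ω → E)) : Prop :=
  X.Nonempty ∧ (∀ x ∈ X, ∀ y, x =ᵐ[P] y → y ∈ X) ∧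
    ∀ (A : Partition mΩ P) (x : ℕ → Ω → E), (∀ k, x k ∈ X) → A.concat x ∈ X

/-- Raw data of a conditional subset `V|A`: the carrier `V` and the base set `A`. -/
abbrev CondRaw (Ω E : Type*) := Set (Ω → E) × Set Ω

/-- `S` represents a conditional subset of the stable set `X`: the carrier is a
stable subset of `X` and the base is measurable. -/
def IsCond (P : @Measure Ω mΩ) (X : Set (Ω → E)) (S : CondRaw Ω E) : Prop :=
  Stable P S.1 ∧ S.1 ⊆ X ∧ MeasurableSet[mΩ] S.2

/-- Conditional inclusion `V|A ⊑ W|B`: `A ⊆ B` a.s., and every `x|A`, `x ∈ V`,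
coincides a.s. on `A` with some `y|A`, `y ∈ W`. -/
def cle (P : @Measure Ω mΩ) (S T : CondRaw Ω E) : Prop :=
  P (S.2 \ T.2) = 0 ∧ ∀ x ∈ S.1, ∃ y ∈ T.1, ∀ᵐ ω ∂P, ω ∈ S.2 → x ω = y ω

/-- Identification of conditional subsets (equality in the conditional power set). -/
def ceq (P : @Measure Ω mΩ) (S T : CondRaw Ω E) : Prop := cle P S T ∧ cle P T S

/-- `x|C ∈ V|C`: the restriction of `x` to `C` agrees a.s. on `C` with an element of `V`. -/
def memOn (P : @Measure Ω mΩ) (C : Set Ω) (x : Ω → E) (V : Set (Ω → E)) : Prop :=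
  ∃ y ∈ V, ∀ᵐ ω ∂P, ω ∈ C → x ω = y ω

/-- `∑ V_k|A_k`, the set of concatenations of sequences taken from the `V_k`. -/
def concatSet (P : @Measure Ω mΩ) (A : Partition mΩ P) (V : ℕ → Set (Ω → E)) :
    Set (Ω → E) :=
  {f | ∃ x : ℕ → Ω → E, (∀ k, x k ∈ V k) ∧ f =ᵐ[P] A.concat x}

/-- Countable concatenation `∑ (V_k|B_k)|A_k := (∑ V_k|A_k)|⋃ (A_k ∩ B_k)` in the
conditional power set. -/
def condConcat (P : @Measure Ω mΩ) (A : Partition mΩ P) (S : ℕ → CondRaw Ω E) :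
    CondRaw Ω E :=
  (concatSet P A fun k => (S k).1, ⋃ k, A.part k ∩ (S k).2)

/-- Restriction `(V|A)|B := V|(A ∩ B)`. -/
def crestrict (S : CondRaw Ω E) (B : Set Ω) : CondRaw Ω E := (S.1, S.2 ∩ B)

/-- The degenerate conditional subset `X|∅ = {∗}`, the least element of `P(X)`. -/
def cbot (X : Set (Ω → E)) : CondRaw Ω E := (X, (∅ : Set Ω))

/-- The greatest element `X = X|Ω` of `P(X)`. -/
def ctop (X : Set (Ω → E)) : CondRaw Ω E := (X, (univ : Set Ω))

/-- `a` is a supremum (conditional union) of the family `s` in `(P(X), ⊑)`. -/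
def IsSupOf (P : @Measure Ω mΩ) (X : Set (Ω → E)) (s : Set (CondRaw Ω E))
    (a : CondRaw Ω E) : Prop :=
  IsCond P X a ∧ (∀ b ∈ s, cle P b a) ∧
    ∀ c, IsCond P X c → (∀ b ∈ s, cle P b c) → cle P a c

/-- `a` is an infimum (conditional intersection) of the family `s` in `(P(X), ⊑)`. -/
def IsInfOf (P : @Measure Ω mΩ) (X : Set (Ω → E)) (s : Set (CondRaw Ω E))
    (a : CondRaw Ω E) : Prop :=
  IsCond P X a ∧ (∀ b ∈ s, cle P a b) ∧
    ∀ c, IsCond P X c → (∀ b ∈ s, cle P c b) → cle P c a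

open Classical in
/-- The conditional union (supremum) of a family of conditional subsets. -/
def cSup (P : @Measure Ω mΩ) (X : Set (Ω → E)) (s : Set (CondRaw Ω E)) : CondRaw Ω E :=
  if h : ∃ a, IsSupOf P X s a then h.choose else ctop X

open Classical in
/-- The conditional intersection (infimum) of a family of conditional subsets. -/
def cInf (P : @Measure Ω mΩ) (X : Set (Ω → E)) (s : Set (CondRaw Ω E)) : CondRaw Ω E :=
  if h : ∃ a, IsInfOf P X s a then h.choose else ctop X

/-- Binary conditional union. -/
def cSup₂ (P : @Measure Ω mΩ) (X : Set (Ω → E)) (a b : CondRaw Ω E) : CondRaw Ω E :=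
  cSup P X {a, b}

/-- Binary conditional intersection. -/
def cInf₂ (P : @Measure Ω mΩ) (X : Set (Ω → E)) (a b : CondRaw Ω E) : CondRaw Ω E :=
  cInf P X {a, b}

/-- Conditional union of an indexed family. -/
def cSupFam (P : @Measure Ω mΩ) (X : Set (Ω → E)) {ι : Sort*}
    (S : ι → CondRaw Ω E) : CondRaw Ω E :=
  cSup P X (range S)

/-- Conditional intersection of an indexed family. -/
def cInfFam (P : @Measure Ω mΩ) (X : Set (Ω → E)) {ι : Sort*}
    (S : ι → CondRaw Ω E) : CondRaw Ω E :=
  cInf P X (range S)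

/-- Disjointness of conditional subsets: `V|A ⊓ W|B = {∗}`. -/
def cdisjoint (P : @Measure Ω mΩ) (X : Set (Ω → E)) (a b : CondRaw Ω E) : Prop :=
  ceq P (cInf₂ P X a b) (cbot X)

/-- The conditional complement `(V|A)^⊏ := ⊔ {W|B : W|B ⊓ V|A = {∗}}`. -/
def ccompl (P : @Measure Ω mΩ) (X : Set (Ω → E)) (a : CondRaw Ω E) : CondRaw Ω E :=
  cSup P X {b | IsCond P X b ∧ cdisjoint P X b a}

open Classical in
/-- The largest measurable set (mod null sets) satisfying a property `Φ`,
obtained by an exhaustion argument; junk value `∅` if there is none. -/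
def largestSet (P : @Measure Ω mΩ) (Φ : Set Ω → Prop) : Set Ω :=
  if h : ∃ C, MeasurableSet[mΩ] C ∧ Φ C ∧
      ∀ C', MeasurableSet[mΩ] C' → Φ C' → P (C' \ C) = 0
  then h.choose else ∅

open Classical in
/-- The smallest measurable set (mod null sets) satisfying a property `Φ`. -/
def smallestSet (P : @Measure Ω mΩ) (Φ : Set Ω → Prop) : Set Ω :=
  if h : ∃ C, MeasurableSet[mΩ] C ∧ Φ C ∧
      ∀ C', MeasurableSet[mΩ] C' → Φ C' → P (C \ C') = 0
  then h.choose else univ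

/-- Essential infimum `inf_i A_i` of a family of measurable sets in the measure algebra. -/
def essInfFam (P : @Measure Ω mΩ) {ι : Sort*} (A : ι → Set Ω) : Set Ω :=
  largestSet P fun C => ∀ i, P (C \ A i) = 0

/-- Essential supremum `sup_i A_i` of a family of measurable sets in the measure algebra. -/
def essSupFam (P : @Measure Ω mΩ) {ι : Sort*} (A : ι → Set Ω) : Set Ω :=
  smallestSet P fun C => ∀ i, P (A i \ C) = 0

/-- A stable collection: a nonempty, `ceq`-saturated family of conditional subsets of `X`
closed under countable concatenations. -/
def IsStableColl (P : @Measure Ω mΩ) (X : Set (Ω → E)) (𝒞 : Set (CondRaw Ω E)) : Prop :=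
  𝒞.Nonempty ∧ (∀ S ∈ 𝒞, IsCond P X S) ∧
    (∀ S ∈ 𝒞, ∀ T, IsCond P X T → ceq P S T → T ∈ 𝒞) ∧
    ∀ (A : Partition mΩ P) (S : ℕ → CondRaw Ω E), (∀ k, S k ∈ 𝒞) → condConcat P A S ∈ 𝒞

/-- A stable σ-algebra on `X`. -/
def IsStableSigma (P : @Measure Ω mΩ) (X : Set (Ω → E)) (𝒳 : Set (CondRaw Ω E)) : Prop :=
  IsStableColl P X 𝒳 ∧ ctop X ∈ 𝒳 ∧ (∀ S ∈ 𝒳, ccompl P X S ∈ 𝒳) ∧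
    ∀ S : ℕ → CondRaw Ω E, (∀ k, S k ∈ 𝒳) → cSupFam P X S ∈ 𝒳

/-- A stable Dynkin system on `X`. -/
def IsStableDynkin (P : @Measure Ω mΩ) (X : Set (Ω → E)) (𝒟 : Set (CondRaw Ω E)) : Prop :=
  IsStableColl P X 𝒟 ∧ ctop X ∈ 𝒟 ∧ (∀ S ∈ 𝒟, ccompl P X S ∈ 𝒟) ∧
    ∀ S : ℕ → CondRaw Ω E, (∀ k, S k ∈ 𝒟) →
      (∀ i j, i ≠ j → cdisjoint P X (S i) (S j)) → cSupFam P X S ∈ 𝒟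

/-- A stable ring on `X`. -/
def IsStableRing (P : @Measure Ω mΩ) (X : Set (Ω → E)) (𝒳 : Set (CondRaw Ω E)) : Prop :=
  IsStableColl P X 𝒳 ∧
    ∀ S ∈ 𝒳, ∀ T ∈ 𝒳, cInf₂ P X S (ccompl P X T) ∈ 𝒳 ∧ cSup₂ P X S T ∈ 𝒳

/-- The stable σ-algebra generated by a collection `ℰ`. -/
def sigmaGen (P : @Measure Ω mΩ) (X : Set (Ω → E)) (ℰ : Set (CondRaw Ω E)) :
    Set (CondRaw Ω E) :=
  ⋂₀ {𝒳 | IsStableSigma P X 𝒳 ∧ ℰ ⊆ 𝒳}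

/-- The stable Dynkin system generated by a collection `ℰ`. -/
def dynkinGen (P : @Measure Ω mΩ) (X : Set (Ω → E)) (ℰ : Set (CondRaw Ω E)) :
    Set (CondRaw Ω E) :=
  ⋂₀ {𝒟 | IsStableDynkin P X 𝒟 ∧ ℰ ⊆ 𝒟}

/-! ### Stable set functions and stable measures -/

/-- A stable set function `μ : 𝒞 → L̄⁰₊` (represented by measurable representatives,
well defined modulo identification, and commuting with countable concatenations). -/
def IsStableSetFun (P : @Measure Ω mΩ) (𝒞 : Set (CondRaw Ω E))
    (μ : CondRaw Ω E → Ω → ℝ≥0∞) : Prop :=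
  (∀ S ∈ 𝒞, Measurable[mΩ] (μ S)) ∧
    (∀ S ∈ 𝒞, ∀ T ∈ 𝒞, ceq P S T → μ S =ᵐ[P] μ T) ∧
    ∀ (A : Partition mΩ P) (S : ℕ → CondRaw Ω E), (∀ k, S k ∈ 𝒞) →
      μ (condConcat P A S) =ᵐ[P] A.concat fun k => μ (S k)

/-- Property (M1): `μ(V|A) = μ(V|A)|A + 0|Aᶜ`. -/
def M1 (P : @Measure Ω mΩ) (𝒞 : Set (CondRaw Ω E)) (μ : CondRaw Ω E → Ω → ℝ≥0∞) : Prop :=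
  ∀ S ∈ 𝒞, μ S =ᵐ[P] S.2.indicator (μ S)

/-- Property (M2): countable additivity on pairwise disjoint sequences whose
conditional union belongs to the domain. -/
def M2 (P : @Measure Ω mΩ) (X : Set (Ω → E)) (𝒳 : Set (CondRaw Ω E))
    (μ : CondRaw Ω E → Ω → ℝ≥0∞) : Prop :=
  ∀ S : ℕ → CondRaw Ω E, (∀ k, S k ∈ 𝒳) →
    (∀ i j, i ≠ j → cdisjoint P X (S i) (S j)) → cSupFam P X S ∈ 𝒳 →
    μ (cSupFam P X S) =ᵐ[P] fun ω => ∑' k, μ (S k) ω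

/-- Finite additivity: (M2) for finite pairwise disjoint families. -/
def FinAdd (P : @Measure Ω mΩ) (X : Set (Ω → E)) (𝒳 : Set (CondRaw Ω E))
    (μ : CondRaw Ω E → Ω → ℝ≥0∞) : Prop :=
  ∀ (n : ℕ) (S : Fin n → CondRaw Ω E), (∀ k, S k ∈ 𝒳) →
    (∀ i j, i ≠ j → cdisjoint P X (S i) (S j)) → cSupFam P X S ∈ 𝒳 →
    μ (cSupFam P X S) =ᵐ[P] fun ω => ∑ k, μ (S k) ω

/-- A stable measure (or stable pre-measure, when the domain is merely a stable
ring): a stable set function satisfying (M1) and (M2). -/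
def IsStableMeasureOn (P : @Measure Ω mΩ) (X : Set (Ω → E)) (𝒳 : Set (CondRaw Ω E))
    (μ : CondRaw Ω E → Ω → ℝ≥0∞) : Prop :=
  IsStableSetFun P 𝒳 μ ∧ M1 P 𝒳 μ ∧ M2 P X 𝒳 μ

/-- A finite stable measure. -/
def IsFiniteStableMeasureOn (P : @Measure Ω mΩ) (X : Set (Ω → E))
    (𝒳 : Set (CondRaw Ω E)) (μ : CondRaw Ω E → Ω → ℝ≥0∞) : Prop :=
  IsStableMeasureOn P X 𝒳 μ ∧ ∀ᵐ ω ∂P, μ (ctop X) ω < ∞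

/-- A stable probability measure. -/
def IsStableProbOn (P : @Measure Ω mΩ) (X : Set (Ω → E)) (𝒳 : Set (CondRaw Ω E))
    (μ : CondRaw Ω E → Ω → ℝ≥0∞) : Prop :=
  IsStableMeasureOn P X 𝒳 μ ∧ μ (ctop X) =ᵐ[P] fun _ => (1 : ℝ≥0∞)

/-- A stable outer measure on the conditional power set of `X`. -/
def IsStableOuter (P : @Measure Ω mΩ) (X : Set (Ω → E))
    (μ : CondRaw Ω E → Ω → ℝ≥0∞) : Prop :=
  (∀ S, IsCond P X S → Measurable[mΩ] (μ S)) ∧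
    (∀ S T, IsCond P X S → IsCond P X T → ceq P S T → μ S =ᵐ[P] μ T) ∧
    (∀ (A : Partition mΩ P) (S : ℕ → CondRaw Ω E), (∀ k, IsCond P X (S k)) →
      μ (condConcat P A S) =ᵐ[P] A.concat fun k => μ (S k)) ∧
    (∀ S, IsCond P X S → ∀ B, MeasurableSet[mΩ] B →
      μ (crestrict S B) =ᵐ[P] B.indicator (μ S)) ∧
    (∀ S T, IsCond P X S → IsCond P X T → cle P S T → ∀ᵐ ω ∂P, μ S ω ≤ μ T ω) ∧
    ∀ S : ℕ → CondRaw Ω E, (∀ k, IsCond P X (S k)) →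
      ∀ᵐ ω ∂P, μ (cSupFam P X S) ω ≤ ∑' k, μ (S k) ω

/-- Stable Carathéodory measurability with respect to a stable outer measure. -/
def CaraMeasurable (P : @Measure Ω mΩ) (X : Set (Ω → E))
    (μ : CondRaw Ω E → Ω → ℝ≥0∞) (S : CondRaw Ω E) : Prop :=
  ∀ T, IsCond P X T →
    (fun ω => μ (cInf₂ P X T S) ω + μ (cInf₂ P X T (ccompl P X S)) ω) =ᵐ[P] μ T

/-! ### Stable functions, the stable Borel σ-algebra on `L⁰`, and the integral -/

/-- The stable set `L⁰_m(E)` of all (classes of) measurable functions `Ω → E`. -/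
def l0m (P : @Measure Ω mΩ) (E : Type*) [MeasurableSpace E] : Set (Ω → E) :=
  {x | AEMeasurable x P}

/-- A stable function between stable sets of functions. -/
def StableFun (P : @Measure Ω mΩ) (X : Set (Ω → E)) (Y : Set (Ω → F'))
    (f : (Ω → E) → Ω → F') : Prop :=
  (∀ x ∈ X, f x ∈ Y) ∧ (∀ x ∈ X, ∀ y ∈ X, x =ᵐ[P] y → f x =ᵐ[P] f y) ∧
    ∀ (A : Partition mΩ P) (x : ℕ → Ω → E), (∀ k, x k ∈ X) →
      f (A.concat x) =ᵐ[P] A.concat fun k => f (x k)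

/-- The conditional preimage `f⁻¹(W|A)`. -/
def cPreimage (P : @Measure Ω mΩ) (X : Set (Ω → E)) (f : (Ω → E) → Ω → F')
    (W : CondRaw Ω F') : CondRaw Ω E :=
  ({x ∈ X | memOn P (largestSet P fun C => P (C \ W.2) = 0 ∧ ∃ x ∈ X, memOn P C (f x) W.1)
      (f x) W.1},
    largestSet P fun C => P (C \ W.2) = 0 ∧ ∃ x ∈ X, memOn P C (f x) W.1)

/-- The stable Borel σ-algebra `B(L⁰)` on `L⁰`, generated by the stable open balls. -/
def borelL0 (P : @Measure Ω mΩ) : Set (CondRaw Ω ℝ) :=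
  sigmaGen P (l0m P ℝ)
    {S | ∃ r ε : Ω → ℝ, AEMeasurable r P ∧ AEMeasurable ε P ∧ (∀ᵐ ω ∂P, 0 < ε ω) ∧
      ceq P S ({s | AEMeasurable s P ∧ ∀ᵐ ω ∂P, |s ω - r ω| < ε ω}, univ)}

/-- A stably measurable function `f : X → L⁰` with respect to a stable σ-algebra `𝒳`. -/
def StablyMeasurable (P : @Measure Ω mΩ) (X : Set (Ω → E)) (𝒳 : Set (CondRaw Ω E))
    (f : (Ω → E) → Ω → ℝ) : Prop :=
  StableFun P X (l0m P ℝ) f ∧ ∀ W ∈ borelL0 P, cPreimage P X f W ∈ 𝒳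

/-- The base set `A_x` of the stable indicator function of `S = V|A` at `x`. -/
def indBase (P : @Measure Ω mΩ) (S : CondRaw Ω E) (x : Ω → E) : Set Ω :=
  largestSet P fun C => P (C \ S.2) = 0 ∧ memOn P C x S.1

/-- The stable indicator function `1_{V|A} : X → L⁰`. -/
def cIndicator (P : @Measure Ω mΩ) (S : CondRaw Ω E) (x : Ω → E) : Ω → ℝ :=
  (indBase P S x).indicator fun _ => (1 : ℝ)

/-- Data of a stable elementary function: coefficients and conditional sets. -/
def ElemRep (Ω E : Type*) := Σ n : ℕ, (Fin n → Ω → ℝ) × (Fin n → CondRaw Ω E)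

/-- The function `∑_{k ≤ n} r_k 1_{V_k|A_k}` represented by `ρ`. -/
def repFun (P : @Measure Ω mΩ) (ρ : ElemRep Ω E) : (Ω → E) → Ω → ℝ :=
  fun x ω => ∑ k, ρ.2.1 k ω * cIndicator P (ρ.2.2 k) x ω

/-- The representation `ρ` is admissible: nonnegative `L⁰`-coefficients and a finite
pairwise disjoint family in `𝒳` whose conditional union is `X`. -/
def GoodRep (P : @Measure Ω mΩ) (X : Set (Ω → E)) (𝒳 : Set (CondRaw Ω E))
    (ρ : ElemRep Ω E) : Prop :=
  (∀ k, AEMeasurable (ρ.2.1 k) P) ∧ (∀ k, ∀ᵐ ω ∂P, 0 ≤ ρ.2.1 k ω) ∧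
    (∀ k, ρ.2.2 k ∈ 𝒳) ∧ (∀ i j, i ≠ j → cdisjoint P X (ρ.2.2 i) (ρ.2.2 j)) ∧
    ceq P (cSupFam P X ρ.2.2) (ctop X)

/-- A stable elementary function. -/
def IsElementary (P : @Measure Ω mΩ) (X : Set (Ω → E)) (𝒳 : Set (CondRaw Ω E))
    (f : (Ω → E) → Ω → ℝ) : Prop :=
  ∃ ρ : ElemRep Ω E, GoodRep P X 𝒳 ρ ∧ ∀ x ∈ X, f x =ᵐ[P] repFun P ρ x

/-- The stable Lebesgue integral `∑_k r_k μ(V_k|A_k)` of the elementary representation. -/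
def repInt (μ : CondRaw Ω E → Ω → ℝ≥0∞) (ρ : ElemRep Ω E) : Ω → ℝ≥0∞ :=
  fun ω => ∑ k, ENNReal.ofReal (ρ.2.1 k ω) * μ (ρ.2.2 k) ω

/-- The stable Lebesgue integral of a nonnegative function, as the supremum of the
integrals of the dominated stable elementary functions. -/
def cIntNN (P : @Measure Ω mΩ) (X : Set (Ω → E)) (𝒳 : Set (CondRaw Ω E))
    (μ : CondRaw Ω E → Ω → ℝ≥0∞) (f : (Ω → E) → Ω → ℝ) : Ω → ℝ≥0∞ :=
  fun ω =>
    ⨆ ρ : {ρ : ElemRep Ω E // GoodRep P X 𝒳 ρ ∧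
        ∀ x ∈ X, ∀ᵐ ω' ∂P, repFun P ρ x ω' ≤ f x ω'},
      repInt μ ρ.1 ω

/-- The positive part `f⁺` of an `L⁰`-valued function. -/
def fplus (f : (Ω → E) → Ω → ℝ) : (Ω → E) → Ω → ℝ := fun x ω => max (f x ω) 0

/-- The negative part `f⁻` of an `L⁰`-valued function. -/
def fminus (f : (Ω → E) → Ω → ℝ) : (Ω → E) → Ω → ℝ := fun x ω => max (-(f x ω)) 0

/-- Stable integrability of `f : X → L⁰`. -/
def CIntegrable (P : @Measure Ω mΩ) (X : Set (Ω → E)) (𝒳 : Set (CondRaw Ω E))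
    (μ : CondRaw Ω E → Ω → ℝ≥0∞) (f : (Ω → E) → Ω → ℝ) : Prop :=
  StablyMeasurable P X 𝒳 f ∧ (∀ᵐ ω ∂P, cIntNN P X 𝒳 μ (fplus f) ω < ∞) ∧
    ∀ᵐ ω ∂P, cIntNN P X 𝒳 μ (fminus f) ω < ∞

/-- The stable Lebesgue integral `∫_X f dμ := ∫ f⁺ dμ − ∫ f⁻ dμ`. -/
def cInt (P : @Measure Ω mΩ) (X : Set (Ω → E)) (𝒳 : Set (CondRaw Ω E))
    (μ : CondRaw Ω E → Ω → ℝ≥0∞) (f : (Ω → E) → Ω → ℝ) : Ω → ℝ :=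
  fun ω => (cIntNN P X 𝒳 μ (fplus f) ω).toReal - (cIntNN P X 𝒳 μ (fminus f) ω).toReal

/-! ### Products and sections -/

/-- The pairing `ω ↦ (x ω, y ω)`. -/
def pairFn (x : Ω → E) (y : Ω → F') : Ω → E × F' := fun ω => (x ω, y ω)

/-- The Cartesian product `X × Y` of two stable sets, as a stable set of functions
`Ω → E × F'`. -/
def prodSet (P : @Measure Ω mΩ) (X : Set (Ω → E)) (Y : Set (Ω → F')) :
    Set (Ω → E × F') :=
  {z | ∃ x ∈ X, ∃ y ∈ Y, z =ᵐ[P] pairFn x y}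

/-- The conditional rectangle `V|A × W|B := (V × W)|A ∩ B`. -/
def crect (P : @Measure Ω mΩ) (S : CondRaw Ω E) (T : CondRaw Ω F') :
    CondRaw Ω (E × F') :=
  (prodSet P S.1 T.1, S.2 ∩ T.2)

/-- The stable product σ-algebra `𝒳 ⊗ 𝒴`, generated by the conditional rectangles. -/
def prodSigma (P : @Measure Ω mΩ) (X : Set (Ω → E)) (Y : Set (Ω → F'))
    (𝒳 : Set (CondRaw Ω E)) (𝒴 : Set (CondRaw Ω F')) : Set (CondRaw Ω (E × F')) :=
  sigmaGen P (prodSet P X Y) {R | ∃ S ∈ 𝒳, ∃ T ∈ 𝒴, ceq P R (crect P S T)}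

/-- The conditional `x`-section `(Z|C)_x` of a conditional subset of `X × Y`. -/
def xsection (P : @Measure Ω mΩ) (Y : Set (Ω → F')) (Z : CondRaw Ω (E × F'))
    (x : Ω → E) : CondRaw Ω F' :=
  ({y ∈ Y | memOn P (largestSet P fun D => P (D \ Z.2) = 0 ∧ ∃ y ∈ Y, memOn P D (pairFn x y) Z.1)
      (pairFn x y) Z.1},
    largestSet P fun D => P (D \ Z.2) = 0 ∧ ∃ y ∈ Y, memOn P D (pairFn x y) Z.1)

/-- The conditional `y`-section `(Z|C)_y` of a conditional subset of `X × Y`. -/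
def ysection (P : @Measure Ω mΩ) (X : Set (Ω → E)) (Z : CondRaw Ω (E × F'))
    (y : Ω → F') : CondRaw Ω E :=
  ({x ∈ X | memOn P (largestSet P fun D => P (D \ Z.2) = 0 ∧ ∃ x ∈ X, memOn P D (pairFn x y) Z.1)
      (pairFn x y) Z.1},
    largestSet P fun D => P (D \ Z.2) = 0 ∧ ∃ x ∈ X, memOn P D (pairFn x y) Z.1)

/-! ### Conditional subsets of `L⁰_m(E)` associated to measurable sets -/

/-- `L⁰_m(F) = {x ∈ L⁰_m(E) : x ∈ F a.s.}` for a measurable `F ⊆ E`. -/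
def l0mF (P : @Measure Ω mΩ) {E : Type*} [MeasurableSpace E] (F : Set E) : Set (Ω → E) :=
  {x | AEMeasurable x P ∧ ∀ᵐ ω ∂P, x ω ∈ F}

/-- `∑ L⁰_m(F_k)|A_k = {x ∈ L⁰_m(E) : x ∈ F_k a.s. on A_k for all k}`. -/
def l0mConcat (P : @Measure Ω mΩ) {E : Type*} [MeasurableSpace E]
    (A : Partition mΩ P) (F : ℕ → Set E) : Set (Ω → E) :=
  {x | AEMeasurable x P ∧ ∀ k, ∀ᵐ ω ∂P, ω ∈ A.part k → x ω ∈ F k}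

/-- The stable ring `ℛ` on `L⁰_m(E)` generated by a measurable structure on `E`:
all conditional subsets of the form `(∑ L⁰_m(F_k)|A_k)|B`. -/
def ringR (P : @Measure Ω mΩ) (E : Type*) [MeasurableSpace E] : Set (CondRaw Ω E) :=
  {S | ∃ (F : ℕ → Set E) (A : Partition mΩ P) (B : Set Ω),
    (∀ k, MeasurableSet (F k)) ∧ MeasurableSet[mΩ] B ∧
      ceq P S (l0mConcat P A F, B)}

end CondMT

namespace CondMT

section Lattice

theorem diff_null_iff' {Ω : Type*} {mΩ : MeasurableSpace Ω} {P : Measure Ω} {A B : Set Ω} :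
    P (A \ B) = 0 ↔ ∀ᵐ ω ∂P, ω ∈ A → ω ∈ B := by
  rw [measure_eq_zero_iff_ae_notMem]
  refine eventually_congr (Eventually.of_forall fun ω => ?_)
  simp only [Set.mem_sdiff, not_and, not_not]

theorem Partition.concat_ae {Ω E : Type*} {mΩ : MeasurableSpace Ω} {P : Measure Ω}
    (A : Partition mΩ P) (x : ℕ → Ω → E) :
    ∀ᵐ ω ∂P, ∀ k, ω ∈ A.part k → A.concat x ω = x k ω := by
  classical
  have h : ∀ᵐ ω ∂P, ∀ i j, i ≠ j → ω ∉ A.part i ∩ A.part j := by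
    simp only [ae_all_iff]
    intro i j hij
    exact measure_eq_zero_iff_ae_notMem.1 (A.disj i j hij)
  filter_upwards [h] with ω hω k hk
  have he : ∃ k, ω ∈ A.part k := ⟨k, hk⟩
  unfold Partition.concat
  rw [dif_pos he]
  generalize hn : Nat.find he = n
  have hs : ω ∈ A.part n := by rw [← hn]; exact Nat.find_spec he
  have : n = k := by
    by_contra hne
    exact hω _ _ hne ⟨hs, hk⟩
  rw [this]

theorem Partition.cover_ae {Ω : Type*} {mΩ : MeasurableSpace Ω} {P : Measure Ω}
    (A : Partition mΩ P) : ∀ᵐ ω ∂P, ∃ k, ω ∈ A.part k := by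
  have := measure_eq_zero_iff_ae_notMem.1 A.cover
  filter_upwards [this] with ω hω
  simpa using hω

theorem Partition.unique_ae {Ω : Type*} {mΩ : MeasurableSpace Ω} {P : Measure Ω}
    (A : Partition mΩ P) : ∀ᵐ ω ∂P, ∀ i j, ω ∈ A.part i → ω ∈ A.part j → i = j := by
  simp only [ae_all_iff]
  intro i j
  by_cases hij : i = j
  · exact Eventually.of_forall fun _ _ _ => hij
  · filter_upwards [measure_eq_zero_iff_ae_notMem.1 (A.disj i j hij)] with ω hω hi hj
    exact absurd ⟨hi, hj⟩ hω

/-- The partition generated by a sequence of measurable sets. -/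
def seqPart {Ω : Type*} {mΩ : MeasurableSpace Ω} (P : Measure Ω) (C : ℕ → Set Ω)
    (hC : ∀ n, MeasurableSet (C n)) : Partition mΩ P where
  part := fun n => match n with
    | 0 => (⋃ n, C n)ᶜ
    | n + 1 => disjointed C n
  meas := fun n => match n with
    | 0 => (MeasurableSet.iUnion hC).compl
    | n + 1 => MeasurableSet.disjointed hC n
  disj := by
    rintro (_ | i) (_ | j) hij
    · exact absurd rfl hij
    · have : (⋃ n, C n)ᶜ ∩ disjointed C j = ∅ := by
        ext ω
        simp only [mem_inter_iff, mem_compl_iff, mem_empty_iff_false, iff_false, not_and]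
        intro h1 h2
        exact h1 (mem_iUnion.2 ⟨j, disjointed_subset C j h2⟩)
      exact (congrArg P this).trans measure_empty
    · have : disjointed C i ∩ (⋃ n, C n)ᶜ = ∅ := by
        ext ω
        simp only [mem_inter_iff, mem_compl_iff, mem_empty_iff_false, iff_false, not_and]
        intro h2 h1
        exact h1 (mem_iUnion.2 ⟨i, disjointed_subset C i h2⟩)
      exact (congrArg P this).trans measure_empty
    · have : disjointed C i ∩ disjointed C j = ∅ :=
        Set.disjoint_iff_inter_eq_empty.1 (disjoint_disjointed C (by omega))
      exact (congrArg P this).trans measure_empty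
  cover := by
    have : (⋃ k, (fun n => match n with
      | 0 => (⋃ n, C n)ᶜ
      | n + 1 => disjointed C n : ℕ → Set Ω) k)ᶜ = ∅ := by
      rw [compl_empty_iff, eq_univ_iff_forall]
      intro ω
      by_cases h : ω ∈ ⋃ n, C n
      · rw [← iUnion_disjointed] at h
        obtain ⟨n, hn⟩ := mem_iUnion.1 h
        exact mem_iUnion.2 ⟨n + 1, hn⟩
      · exact mem_iUnion.2 ⟨0, h⟩
    rw [this]; simp

/-- The partition `{C, Cᶜ}`. -/
def twoPart {Ω : Type*} {mΩ : MeasurableSpace Ω} (P : Measure Ω) (C : Set Ω)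
    (hC : MeasurableSet C) : Partition mΩ P where
  part := fun n => match n with
    | 0 => C
    | 1 => Cᶜ
    | _ + 2 => ∅
  meas := fun n => match n with
    | 0 => hC
    | 1 => hC.compl
    | _ + 2 => MeasurableSet.empty
  disj := by
    rintro (_ | _ | i) (_ | _ | j) hij <;> simp_all
  cover := by
    have : (⋃ k, (fun n => match n with
      | 0 => C
      | 1 => Cᶜ
      | _ + 2 => ∅ : ℕ → Set Ω) k)ᶜ = ∅ := by
      rw [compl_empty_iff, eq_univ_iff_forall]
      intro ω
      by_cases h : ω ∈ C
      · exact mem_iUnion.2 ⟨0, h⟩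
      · exact mem_iUnion.2 ⟨1, h⟩
    rw [this]; simp

theorem glue {Ω E : Type*} {mΩ : MeasurableSpace Ω} {P : Measure Ω} {V : Set (Ω → E)}
    (hV : Stable P V) (C : ℕ → Set Ω) (hC : ∀ n, MeasurableSet (C n)) (y : ℕ → Ω → E)
    (hy : ∀ n, y n ∈ V) :
    ∃ z ∈ V, ∀ᵐ ω ∂P, ∀ n, ω ∈ disjointed C n → z ω = y n ω := by
  refine ⟨_, hV.2.2 (seqPart P C hC) (fun n => match n with
    | 0 => y 0
    | n + 1 => y n) ?_, ?_⟩
  · rintro (_ | n)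
    · exact hy 0
    · exact hy n
  · filter_upwards [(seqPart P C hC).concat_ae (fun n => match n with
      | 0 => y 0
      | n + 1 => y n)] with ω hω n hn
    exact hω (n + 1) hn

theorem glue2 {Ω E : Type*} {mΩ : MeasurableSpace Ω} {P : Measure Ω} {V : Set (Ω → E)}
    (hV : Stable P V) {C : Set Ω} (hC : MeasurableSet C) {x y : Ω → E}
    (hx : x ∈ V) (hy : y ∈ V) :
    ∃ z ∈ V, ∀ᵐ ω ∂P, (ω ∈ C → z ω = x ω) ∧ (ω ∉ C → z ω = y ω) := by
  refine ⟨_, hV.2.2 (twoPart P C hC) (fun n => match n with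
    | 0 => x
    | _ + 1 => y) ?_, ?_⟩
  · rintro (_ | n)
    · exact hx
    · exact hy
  · filter_upwards [(twoPart P C hC).concat_ae (fun n => match n with
      | 0 => x
      | _ + 1 => y)] with ω hω
    exact ⟨fun h => hω 0 h, fun h => hω 1 h⟩

theorem exists_largest {Ω : Type*} {mΩ : MeasurableSpace Ω} {P : Measure Ω}
    [IsFiniteMeasure P] (Φ : Set Ω → Prop) (h0 : Φ ∅)
    (hU : ∀ C : ℕ → Set Ω, (∀ n, MeasurableSet (C n)) → (∀ n, Φ (C n)) → Φ (⋃ n, C n)) :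
    ∃ C, MeasurableSet C ∧ Φ C ∧ ∀ C', MeasurableSet C' → Φ C' → P (C' \ C) = 0 := by
  set T : Set ℝ≥0∞ := {r | ∃ C, MeasurableSet C ∧ Φ C ∧ P C = r} with hT
  have hne : T.Nonempty := ⟨_, ∅, MeasurableSet.empty, h0, rfl⟩
  obtain ⟨u, -, hu, huT⟩ := exists_seq_tendsto_sSup hne (OrderTop.bddAbove T)
  choose C hCm hCΦ hCu using huT
  refine ⟨⋃ n, C n, MeasurableSet.iUnion hCm, hU C hCm hCΦ, fun C' hC' hΦ' => ?_⟩
  have hs : sSup T ≤ P (⋃ n, C n) := by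
    refine le_of_tendsto' hu fun n => ?_
    rw [← hCu n]
    exact measure_mono (subset_iUnion C n)
  have hΦ2 : Φ (⋃ n, (fun n => match n with
      | 0 => C'
      | n + 1 => C n : ℕ → Set Ω) n) := by
    refine hU _ ?_ ?_
    · rintro (_ | n)
      · exact hC'
      · exact hCm n
    · rintro (_ | n)
      · exact hΦ'
      · exact hCΦ n
  have hm2 : MeasurableSet (⋃ n, (fun n => match n with
      | 0 => C'
      | n + 1 => C n : ℕ → Set Ω) n) := by
    refine MeasurableSet.iUnion ?_
    rintro (_ | n)
    · exact hC'
    · exact hCm n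
  have hle : P (⋃ n, (fun n => match n with
      | 0 => C'
      | n + 1 => C n : ℕ → Set Ω) n) ≤ sSup T := le_sSup ⟨_, hm2, hΦ2, rfl⟩
  have hsub : (⋃ n, C n) ∪ (C' \ ⋃ n, C n) ⊆ ⋃ n, (fun n => match n with
      | 0 => C'
      | n + 1 => C n : ℕ → Set Ω) n := by
    rintro ω (h | h)
    · obtain ⟨n, hn⟩ := mem_iUnion.1 h
      exact mem_iUnion.2 ⟨n + 1, hn⟩
    · exact mem_iUnion.2 ⟨0, h.1⟩
  have h1 : P (⋃ n, C n) + P (C' \ ⋃ n, C n) ≤ P (⋃ n, C n) + 0 := by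
    rw [← measure_union disjoint_sdiff_right (hC'.diff (MeasurableSet.iUnion hCm)), add_zero]
    exact (measure_mono hsub).trans (hle.trans hs)
  have := (ENNReal.add_le_add_iff_left (measure_ne_top P _)).1 h1
  exact le_antisymm this bot_le

theorem indBase_spec {Ω E : Type*} {mΩ : MeasurableSpace Ω} {P : Measure Ω}
    [IsFiniteMeasure P] {X : Set (Ω → E)} {S : CondRaw Ω E} (hS : IsCond P X S) (x : Ω → E) :
    MeasurableSet (indBase P S x) ∧
      (P (indBase P S x \ S.2) = 0 ∧ memOn P (indBase P S x) x S.1) ∧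
      ∀ C', MeasurableSet C' → (P (C' \ S.2) = 0 ∧ memOn P C' x S.1) →
        P (C' \ indBase P S x) = 0 := by
  have h : ∃ C, MeasurableSet[mΩ] C ∧ (P (C \ S.2) = 0 ∧ memOn P C x S.1) ∧
      ∀ C', MeasurableSet[mΩ] C' → (P (C' \ S.2) = 0 ∧ memOn P C' x S.1) → P (C' \ C) = 0 := by
    apply exists_largest (fun C => P (C \ S.2) = 0 ∧ memOn P C x S.1)
    · obtain ⟨y, hy⟩ := hS.1.1
      exact ⟨by simp, y, hy, Eventually.of_forall fun ω h => h.elim⟩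
    · intro C hC hΦ
      refine ⟨?_, ?_⟩
      · rw [iUnion_sdiff]
        exact measure_iUnion_null fun n => (hΦ n).1
      · choose y hy hxy using fun n => (hΦ n).2
        obtain ⟨z, hz, hzy⟩ := glue hS.1 C hC y hy
        refine ⟨z, hz, ?_⟩
        filter_upwards [hzy, ae_all_iff.2 hxy] with ω h1 h2 h3
        rw [← iUnion_disjointed] at h3
        obtain ⟨n, hn⟩ := mem_iUnion.1 h3
        rw [h1 n hn, h2 n (disjointed_subset C n hn)]
  unfold indBase largestSet
  rw [dif_pos h]
  exact h.choose_spec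

section

variable {Ω E : Type*} {mΩ : MeasurableSpace Ω} {P : Measure Ω}
    [IsFiniteMeasure P] {X : Set (Ω → E)} {S T : CondRaw Ω E}

theorem ind_meas (hS : IsCond P X S) (x : Ω → E) : MeasurableSet (indBase P S x) :=
  (indBase_spec hS x).1

theorem ind_base (hS : IsCond P X S) (x : Ω → E) :
    ∀ᵐ ω ∂P, ω ∈ indBase P S x → ω ∈ S.2 :=
  diff_null_iff'.1 (indBase_spec hS x).2.1.1

theorem ind_wit (hS : IsCond P X S) (x : Ω → E) :
    ∃ y ∈ S.1, ∀ᵐ ω ∂P, ω ∈ indBase P S x → x ω = y ω :=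
  (indBase_spec hS x).2.1.2

theorem ind_max (hS : IsCond P X S) {x y : Ω → E} {C : Set Ω} (hC : MeasurableSet C)
    (hCS : ∀ᵐ ω ∂P, ω ∈ C → ω ∈ S.2) (hy : y ∈ S.1) (hxy : ∀ᵐ ω ∂P, ω ∈ C → x ω = y ω) :
    ∀ᵐ ω ∂P, ω ∈ C → ω ∈ indBase P S x :=
  diff_null_iff'.1 ((indBase_spec hS x).2.2 C hC ⟨diff_null_iff'.2 hCS, y, hy, hxy⟩)

theorem ind_self (hS : IsCond P X S) {x : Ω → E} (hx : x ∈ S.1) :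
    ∀ᵐ ω ∂P, ω ∈ S.2 → ω ∈ indBase P S x :=
  ind_max hS hS.2.2 (Eventually.of_forall fun _ h => h) hx (Eventually.of_forall fun _ _ => rfl)

theorem ind_ext (hS : IsCond P X S) {x y : Ω → E} {C : Set Ω} (hC : MeasurableSet C)
    (hxy : ∀ᵐ ω ∂P, ω ∈ C → x ω = y ω) :
    ∀ᵐ ω ∂P, ω ∈ C → ω ∈ indBase P S x → ω ∈ indBase P S y := by
  obtain ⟨z, hz, hxz⟩ := ind_wit hS x
  have := ind_max hS (x := y) (hC.inter (ind_meas hS x)) ?_ hz ?_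
  · filter_upwards [this] with ω h h1 h2
    exact h ⟨h1, h2⟩
  · filter_upwards [ind_base hS x] with ω h h1
    exact h h1.2
  · filter_upwards [hxz, hxy] with ω h1 h2 h
    rw [← h2 h.1, h1 h.2]

theorem cle_iff (hS : IsCond P X S) (hT : IsCond P X T) :
    cle P S T ↔ ∀ x ∈ X, ∀ᵐ ω ∂P, ω ∈ indBase P S x → ω ∈ indBase P T x := by
  constructor
  · rintro ⟨h1, h2⟩ x hx
    obtain ⟨y, hy, hxy⟩ := ind_wit hS x
    obtain ⟨z, hz, hyz⟩ := h2 y hy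
    refine ind_max hT (ind_meas hS x) ?_ hz ?_
    · filter_upwards [ind_base hS x, diff_null_iff'.1 h1] with ω h3 h4 h5
      exact h4 (h3 h5)
    · filter_upwards [hxy, hyz, ind_base hS x] with ω h3 h4 h5 h6
      rw [h3 h6, h4 (h5 h6)]
  · intro h
    refine ⟨?_, ?_⟩
    · obtain ⟨x, hx⟩ := hS.1.1
      rw [diff_null_iff']
      filter_upwards [ind_self hS hx, h x (hS.2.1 hx), ind_base hT x] with ω h1 h2 h3 h4
      exact h3 (h2 (h1 h4))
    · intro x hx
      obtain ⟨y, hy, hxy⟩ := ind_wit hT x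
      refine ⟨y, hy, ?_⟩
      filter_upwards [ind_self hS hx, h x (hS.2.1 hx), hxy] with ω h1 h2 h3 h4
      exact h3 (h2 (h1 h4))

theorem ceq_iff (hS : IsCond P X S) (hT : IsCond P X T) :
    ceq P S T ↔ ∀ x ∈ X, ∀ᵐ ω ∂P, ω ∈ indBase P S x ↔ ω ∈ indBase P T x := by
  unfold ceq
  rw [cle_iff hS hT, cle_iff hT hS]
  constructor
  · rintro ⟨h1, h2⟩ x hx
    filter_upwards [h1 x hx, h2 x hx] with ω h3 h4
    exact ⟨h3, h4⟩
  · intro h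
    exact ⟨fun x hx => (h x hx).mono fun ω h => h.1, fun x hx => (h x hx).mono fun ω h => h.2⟩

/-- Every extensional family of measurable sets is realized by a conditional subset. -/
theorem realize (hX : Stable P X) (G : (Ω → E) → Set Ω) (hG : ∀ x ∈ X, MeasurableSet (G x))
    (hext : ∀ x ∈ X, ∀ y ∈ X, ∀ C, MeasurableSet C → (∀ᵐ ω ∂P, ω ∈ C → x ω = y ω) →
      ∀ᵐ ω ∂P, ω ∈ C → ω ∈ G x → ω ∈ G y) :
    ∃ S, IsCond P X S ∧ ∀ x ∈ X, ∀ᵐ ω ∂P, ω ∈ indBase P S x ↔ ω ∈ G x := by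
  obtain ⟨A, hA, ⟨x0, hx0, hAx0⟩, hmax⟩ := exists_largest (P := P)
    (fun C => ∃ x ∈ X, ∀ᵐ ω ∂P, ω ∈ C → ω ∈ G x) (by
      obtain ⟨x, hx⟩ := hX.1
      exact ⟨x, hx, Eventually.of_forall fun _ h => h.elim⟩) (by
      intro C hC hΦ
      choose y hy hyC using hΦ
      obtain ⟨z, hz, hzy⟩ := glue hX C hC y hy
      refine ⟨z, hz, ?_⟩
      have h1 : ∀ n, ∀ᵐ ω ∂P, ω ∈ disjointed C n → ω ∈ G (y n) → ω ∈ G z := fun n =>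
        hext (y n) (hy n) z hz _ (MeasurableSet.disjointed hC n)
          (hzy.mono fun ω h h' => (h n h').symm)
      filter_upwards [ae_all_iff.2 h1, ae_all_iff.2 hyC] with ω h2 h3 h4
      rw [← iUnion_disjointed] at h4
      obtain ⟨n, hn⟩ := mem_iUnion.1 h4
      exact h2 n hn (h3 n (disjointed_subset C n hn)))
  have hS : IsCond P X (({x | x ∈ X ∧ ∀ᵐ ω ∂P, ω ∈ A → ω ∈ G x}, A) : CondRaw Ω E) := by
    refine ⟨⟨⟨x0, hx0, hAx0⟩, ?_, ?_⟩, fun x hx => hx.1, hA⟩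
    · rintro x ⟨hx, hxA⟩ y hxy
      have hy : y ∈ X := hX.2.1 x hx y hxy
      refine ⟨hy, ?_⟩
      filter_upwards [hxA, hext x hx y hy univ MeasurableSet.univ (hxy.mono fun ω h _ => h)]
        with ω h1 h2 h3
      exact h2 (mem_univ _) (h1 h3)
    · intro B x hx
      have hz : B.concat x ∈ X := hX.2.2 B x fun k => (hx k).1
      refine ⟨hz, ?_⟩
      have h1 : ∀ k, ∀ᵐ ω ∂P, ω ∈ B.part k → ω ∈ G (x k) → ω ∈ G (B.concat x) := fun k =>
        hext (x k) (hx k).1 _ hz _ (B.meas k) ((B.concat_ae x).mono fun ω h h' => (h k h').symm)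
      filter_upwards [ae_all_iff.2 h1, ae_all_iff.2 fun k => (hx k).2, B.cover_ae]
        with ω h2 h3 h4 h5
      obtain ⟨k, hk⟩ := h4
      exact h2 k hk (h3 k h5)
  refine ⟨_, hS, fun x hx => ?_⟩
  have hle : ∀ᵐ ω ∂P, ω ∈ indBase P (({x | x ∈ X ∧ ∀ᵐ ω ∂P, ω ∈ A → ω ∈ G x}, A) :
      CondRaw Ω E) x → ω ∈ G x := by
    obtain ⟨y, hy, hxy⟩ := ind_wit hS x
    filter_upwards [ind_base hS x, hy.2, hext y hy.1 x hx _ (ind_meas hS x)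
      (hxy.mono fun ω h h' => (h h').symm)] with ω h1 h2 h3 h4
    exact h3 h4 (h2 (h1 h4))
  have hGA : ∀ᵐ ω ∂P, ω ∈ G x → ω ∈ A :=
    diff_null_iff'.1 (hmax (G x) (hG x hx) ⟨x, hx, Eventually.of_forall fun _ h => h⟩)
  obtain ⟨z, hz, hzx⟩ := glue2 hX (hG x hx) hx hx0
  have hzV : z ∈ X ∧ ∀ᵐ ω ∂P, ω ∈ A → ω ∈ G z := by
    refine ⟨hz, ?_⟩
    filter_upwards [hAx0, hext x hx z hz _ (hG x hx) (hzx.mono fun ω h h' => (h.1 h').symm),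
      hext x0 hx0 z hz _ (hG x hx).compl (hzx.mono fun ω h h' => (h.2 h').symm)]
      with ω h1 h2 h3 h4
    by_cases h : ω ∈ G x
    · exact h2 h h
    · exact h3 h (h1 h4)
  have hge := ind_max hS (x := x) (hG x hx) hGA hzV (hzx.mono fun ω h h' => (h.1 h').symm)
  filter_upwards [hle, hge] with ω h1 h2
  exact ⟨h1, h2⟩

end

section

variable {Ω E : Type*} {mΩ : MeasurableSpace Ω} {P : Measure Ω}
    [IsFiniteMeasure P] {X : Set (Ω → E)}

theorem cSup_spec (hX : Stable P X) {ι : Type*} [Countable ι] (S : ι → CondRaw Ω E)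
    (hS : ∀ i, IsCond P X (S i)) :
    IsCond P X (cSup P X (range S)) ∧
      ∀ x ∈ X, ∀ᵐ ω ∂P, ω ∈ indBase P (cSup P X (range S)) x ↔ ∃ i, ω ∈ indBase P (S i) x := by
  obtain ⟨a, ha, haD⟩ := realize hX (fun x => ⋃ i, indBase P (S i) x)
    (fun x _ => MeasurableSet.iUnion fun i => ind_meas (hS i) x) (by
      intro x _ y _ C hC hxy
      filter_upwards [ae_all_iff.2 fun i => ind_ext (hS i) hC hxy] with ω h1 h2 h3
      obtain ⟨i, hi⟩ := mem_iUnion.1 h3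
      exact mem_iUnion.2 ⟨i, h1 i h2 hi⟩)
  have haS : IsSupOf P X (range S) a := by
    refine ⟨ha, ?_, ?_⟩
    · rintro _ ⟨i, rfl⟩
      rw [cle_iff (hS i) ha]
      intro x hx
      filter_upwards [haD x hx] with ω h1 h2
      exact h1.2 (mem_iUnion.2 ⟨i, h2⟩)
    · intro c hc h
      rw [cle_iff ha hc]
      intro x hx
      have := fun i => (cle_iff (hS i) hc).1 (h (S i) ⟨i, rfl⟩) x hx
      filter_upwards [haD x hx, ae_all_iff.2 this] with ω h1 h2 h3
      obtain ⟨i, hi⟩ := mem_iUnion.1 (h1.1 h3)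
      exact h2 i hi
  have hex : ∃ a, IsSupOf P X (range S) a := ⟨a, haS⟩
  have hsp : IsSupOf P X (range S) (cSup P X (range S)) := by
    unfold cSup
    rw [dif_pos hex]
    exact hex.choose_spec
  refine ⟨hsp.1, ?_⟩
  have hceq : ceq P (cSup P X (range S)) a :=
    ⟨hsp.2.2 a ha haS.2.1, haS.2.2 _ hsp.1 hsp.2.1⟩
  intro x hx
  filter_upwards [(ceq_iff hsp.1 ha).1 hceq x hx, haD x hx] with ω h1 h2
  rw [h1, h2, mem_iUnion]

theorem cSup₂_spec (hX : Stable P X) {S T : CondRaw Ω E} (hS : IsCond P X S)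
    (hT : IsCond P X T) :
    IsCond P X (cSup₂ P X S T) ∧ ∀ x ∈ X, ∀ᵐ ω ∂P,
      ω ∈ indBase P (cSup₂ P X S T) x ↔ ω ∈ indBase P S x ∨ ω ∈ indBase P T x := by
  have hr : range (fun b : Bool => cond b S T) = {S, T} := by
    ext a
    simp only [mem_range, Bool.exists_bool, cond_false, cond_true, mem_insert_iff,
      mem_singleton_iff]
    constructor
    · rintro (h | h)
      · exact Or.inr h.symm
      · exact Or.inl h.symm
    · rintro (h | h)
      · exact Or.inr h.symm
      · exact Or.inl h.symm
  have := cSup_spec hX (fun b : Bool => cond b S T) (by rintro (_ | _) <;> assumption)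
  rw [hr] at this
  refine ⟨this.1, fun x hx => ?_⟩
  filter_upwards [this.2 x hx] with ω h
  unfold cSup₂
  rw [h]
  simp only [Bool.exists_bool, cond_false, cond_true]
  exact or_comm

theorem cInf₂_spec (hX : Stable P X) {S T : CondRaw Ω E} (hS : IsCond P X S)
    (hT : IsCond P X T) :
    IsCond P X (cInf₂ P X S T) ∧ ∀ x ∈ X, ∀ᵐ ω ∂P,
      ω ∈ indBase P (cInf₂ P X S T) x ↔ ω ∈ indBase P S x ∧ ω ∈ indBase P T x := by
  obtain ⟨a, ha, haD⟩ := realize hX (fun x => indBase P S x ∩ indBase P T x)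
    (fun x _ => (ind_meas hS x).inter (ind_meas hT x)) (by
      intro x _ y _ C hC hxy
      filter_upwards [ind_ext hS hC hxy, ind_ext hT hC hxy] with ω h1 h2 h3 h4
      exact ⟨h1 h3 h4.1, h2 h3 h4.2⟩)
  have haS : IsInfOf P X {S, T} a := by
    refine ⟨ha, ?_, ?_⟩
    · rintro b (rfl | rfl)
      · rw [cle_iff ha hS]
        intro x hx
        filter_upwards [haD x hx] with ω h1 h2
        exact (h1.1 h2).1
      · rw [cle_iff ha hT]
        intro x hx
        filter_upwards [haD x hx] with ω h1 h2
        exact (h1.1 h2).2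
    · intro c hc h
      rw [cle_iff hc ha]
      intro x hx
      filter_upwards [haD x hx, (cle_iff hc hS).1 (h S (Or.inl rfl)) x hx,
        (cle_iff hc hT).1 (h T (Or.inr rfl)) x hx] with ω h1 h2 h3 h4
      exact h1.2 ⟨h2 h4, h3 h4⟩
  have hex : ∃ a, IsInfOf P X {S, T} a := ⟨a, haS⟩
  have hsp : IsInfOf P X {S, T} (cInf₂ P X S T) := by
    unfold cInf₂ cInf
    rw [dif_pos hex]
    exact hex.choose_spec
  refine ⟨hsp.1, ?_⟩
  have hceq : ceq P (cInf₂ P X S T) a :=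
    ⟨haS.2.2 _ hsp.1 hsp.2.1, hsp.2.2 a ha haS.2.1⟩
  intro x hx
  filter_upwards [(ceq_iff hsp.1 ha).1 hceq x hx, haD x hx] with ω h1 h2
  rw [h1, h2, mem_inter_iff]

theorem cbot_cond (hX : Stable P X) : IsCond P X (cbot X) :=
  ⟨hX, Subset.rfl, MeasurableSet.empty⟩

theorem ctop_cond (hX : Stable P X) : IsCond P X (ctop X) :=
  ⟨hX, Subset.rfl, MeasurableSet.univ⟩

theorem cbot_spec (hX : Stable P X) (x : Ω → E) : ∀ᵐ ω ∂P, ω ∉ indBase P (cbot X) x := by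
  filter_upwards [ind_base (cbot_cond hX) x] with ω h1 h2
  exact h1 h2

theorem ctop_spec (hX : Stable P X) {x : Ω → E} (hx : x ∈ X) :
    ∀ᵐ ω ∂P, ω ∈ indBase P (ctop X) x := by
  filter_upwards [ind_self (ctop_cond hX) hx] with ω h1
  exact h1 (mem_univ _)

theorem cdisjoint_iff (hX : Stable P X) {S T : CondRaw Ω E} (hS : IsCond P X S)
    (hT : IsCond P X T) :
    cdisjoint P X S T ↔
      ∀ x ∈ X, ∀ᵐ ω ∂P, ¬ (ω ∈ indBase P S x ∧ ω ∈ indBase P T x) := by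
  unfold cdisjoint
  rw [ceq_iff (cInf₂_spec hX hS hT).1 (cbot_cond hX)]
  refine forall₂_congr fun x hx => ?_
  constructor
  · intro h
    filter_upwards [h, (cInf₂_spec hX hS hT).2 x hx, cbot_spec hX x] with ω h1 h2 h3
    rw [← h2, h1]
    exact h3
  · intro h
    filter_upwards [h, (cInf₂_spec hX hS hT).2 x hx, cbot_spec hX x] with ω h1 h2 h3
    rw [h2]
    exact ⟨fun h => (h1 h).elim, fun h => (h3 h).elim⟩

theorem ccompl_spec (hX : Stable P X) {S : CondRaw Ω E} (hS : IsCond P X S) :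
    IsCond P X (ccompl P X S) ∧ ∀ x ∈ X, ∀ᵐ ω ∂P,
      ω ∈ indBase P (ccompl P X S) x ↔ ω ∉ indBase P S x := by
  obtain ⟨a, ha, haD⟩ := realize hX (fun x => (indBase P S x)ᶜ)
    (fun x _ => (ind_meas hS x).compl) (by
      intro x _ y _ C hC hxy
      filter_upwards [ind_ext hS hC (hxy.mono fun ω h h' => (h h').symm)] with ω h1 h3 h4 h5
      exact h4 (h1 h3 h5))
  have hmem : a ∈ {b | IsCond P X b ∧ cdisjoint P X b S} := by
    refine ⟨ha, (cdisjoint_iff hX ha hS).2 fun x hx => ?_⟩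
    filter_upwards [haD x hx] with ω h1 h2
    exact h1.1 h2.1 h2.2
  have haS : IsSupOf P X {b | IsCond P X b ∧ cdisjoint P X b S} a := by
    refine ⟨ha, ?_, fun c hc h => h a hmem⟩
    rintro b ⟨hb, hbS⟩
    rw [cle_iff hb ha]
    intro x hx
    filter_upwards [haD x hx, (cdisjoint_iff hX hb hS).1 hbS x hx] with ω h1 h2 h3
    exact h1.2 fun h4 => h2 ⟨h3, h4⟩
  have hex : ∃ a, IsSupOf P X {b | IsCond P X b ∧ cdisjoint P X b S} a := ⟨a, haS⟩
  have hsp : IsSupOf P X {b | IsCond P X b ∧ cdisjoint P X b S} (ccompl P X S) := by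
    unfold ccompl cSup
    rw [dif_pos hex]
    exact hex.choose_spec
  refine ⟨hsp.1, ?_⟩
  have hceq : ceq P (ccompl P X S) a :=
    ⟨hsp.2.2 a ha haS.2.1, haS.2.2 _ hsp.1 hsp.2.1⟩
  intro x hx
  filter_upwards [(ceq_iff hsp.1 ha).1 hceq x hx, haD x hx] with ω h1 h2
  rw [h1, h2, mem_compl_iff]

theorem mem_concatSet_iff (A : Partition mΩ P) (V : ℕ → Set (Ω → E)) (f : Ω → E) :
    f ∈ concatSet P A V ↔ ∀ k, memOn P (A.part k) f (V k) := by
  constructor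
  · rintro ⟨x, hx, hf⟩ k
    refine ⟨x k, hx k, ?_⟩
    filter_upwards [hf, A.concat_ae x] with ω h1 h2 h3
    rw [h1, h2 k h3]
  · intro h
    choose x hx hfx using h
    refine ⟨x, hx, ?_⟩
    filter_upwards [ae_all_iff.2 hfx, A.concat_ae x, A.cover_ae] with ω h1 h2 h3
    obtain ⟨k, hk⟩ := h3
    rw [h1 k hk, h2 k hk]

theorem condConcat_spec (hX : Stable P X) (A : Partition mΩ P) (S : ℕ → CondRaw Ω E)
    (hS : ∀ k, IsCond P X (S k)) :
    IsCond P X (condConcat P A S) ∧ ∀ x ∈ X, ∀ᵐ ω ∂P,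
      ω ∈ indBase P (condConcat P A S) x ↔ ∃ k, ω ∈ A.part k ∧ ω ∈ indBase P (S k) x := by
  have hcc : IsCond P X (condConcat P A S) := by
    refine ⟨⟨?_, ?_, ?_⟩, ?_, ?_⟩
    · choose y hy using fun k => (hS k).1.1
      exact ⟨A.concat y, y, hy, EventuallyEq.rfl⟩
    · rintro x ⟨y, hy, hxy⟩ z hxz
      exact ⟨y, hy, hxz.symm.trans hxy⟩
    · intro B f hf
      change B.concat f ∈ concatSet P A fun k => (S k).1
      rw [mem_concatSet_iff]
      intro k
      have h1 : ∀ j, memOn P (A.part k) (f j) (S k).1 := fun j =>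
        (mem_concatSet_iff A _ _).1 (hf j) k
      choose y hy hfy using h1
      refine ⟨B.concat y, (hS k).1.2.2 B y hy, ?_⟩
      filter_upwards [ae_all_iff.2 hfy, B.concat_ae f, B.concat_ae y, B.cover_ae]
        with ω h2 h3 h4 h5 h6
      obtain ⟨j, hj⟩ := h5
      rw [h3 j hj, h4 j hj, h2 j h6]
    · rintro f ⟨y, hy, hfy⟩
      exact hX.2.1 _ (hX.2.2 A y fun k => (hS k).2.1 (hy k)) _ hfy.symm
    · exact MeasurableSet.iUnion fun k => (A.meas k).inter (hS k).2.2
  refine ⟨hcc, fun x hx => ?_⟩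
  have hle : ∀ᵐ ω ∂P, ω ∈ indBase P (condConcat P A S) x →
      ∃ k, ω ∈ A.part k ∧ ω ∈ indBase P (S k) x := by
    obtain ⟨y, hy, hxy⟩ := ind_wit hcc x
    have hy' := (mem_concatSet_iff A _ _).1 hy
    choose z hz hyz using hy'
    have h1 : ∀ k, ∀ᵐ ω ∂P, ω ∈ indBase P (condConcat P A S) x ∩ (A.part k ∩ (S k).2) →
        ω ∈ indBase P (S k) x := by
      intro k
      refine ind_max (hS k) ((ind_meas hcc x).inter ((A.meas k).inter (hS k).2.2))
        (Eventually.of_forall fun ω h => h.2.2) (hz k) ?_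
      filter_upwards [hxy, hyz k] with ω h1 h2 h3
      rw [h1 h3.1, h2 h3.2.1]
    filter_upwards [ae_all_iff.2 h1, ind_base hcc x] with ω h2 h3 h4
    obtain ⟨k, hk⟩ := mem_iUnion.1 (h3 h4)
    exact ⟨k, hk.1, h2 k ⟨h4, hk⟩⟩
  have hge : ∀ᵐ ω ∂P, (ω ∈ ⋃ k, A.part k ∩ indBase P (S k) x) →
      ω ∈ indBase P (condConcat P A S) x := by
    choose y hy hxy using fun k => ind_wit (hS k) x
    refine ind_max hcc (y := A.concat y)
      (MeasurableSet.iUnion fun k => (A.meas k).inter (ind_meas (hS k) x)) ?_ ?_ ?_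
    · filter_upwards [ae_all_iff.2 fun k => ind_base (hS k) x] with ω h1 h2
      obtain ⟨k, hk⟩ := mem_iUnion.1 h2
      exact mem_iUnion.2 ⟨k, hk.1, h1 k hk.2⟩
    · exact ⟨y, hy, EventuallyEq.rfl⟩
    · filter_upwards [ae_all_iff.2 hxy, A.concat_ae y] with ω h1 h2 h3
      obtain ⟨k, hk⟩ := mem_iUnion.1 h3
      rw [h2 k hk.1, h1 k hk.2]
  filter_upwards [hle, hge] with ω h1 h2
  exact ⟨h1, fun ⟨k, hk⟩ => h2 (mem_iUnion.2 ⟨k, hk⟩)⟩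

end

end Lattice

section Construction

/-- The graph of a conditional subset. -/
def grSet {Ω E : Type*} {mΩ : MeasurableSpace Ω} (P : Measure Ω) (S : CondRaw Ω E) :
    Set ((Ω → E) × Ω) :=
  {p | p.2 ∈ indBase P S p.1}

/-- `G` represents the conditional subset `S`. -/
def Rep {Ω E : Type*} {mΩ : MeasurableSpace Ω} (P : Measure Ω) (X : Set (Ω → E))
    (S : CondRaw Ω E) (G : Set ((Ω → E) × Ω)) : Prop :=
  ∀ x ∈ X, ∀ᵐ ω ∂P, (x, ω) ∈ G ↔ ω ∈ indBase P S x

/-- The ring of sets representing elements of `𝒳`. -/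
def ringSets {Ω E : Type*} {mΩ : MeasurableSpace Ω} (P : Measure Ω) (X : Set (Ω → E))
    (𝒳 : Set (CondRaw Ω E)) : Set (Set ((Ω → E) × Ω)) :=
  {G | ∃ S ∈ 𝒳, Rep P X S G}

open Classical in
/-- The scalar content on the ring of representing sets. -/
def ringFun {Ω E : Type*} {mΩ : MeasurableSpace Ω} (P : Measure Ω) (X : Set (Ω → E))
    (𝒳 : Set (CondRaw Ω E)) (μ : CondRaw Ω E → Ω → ℝ≥0∞) (G : Set ((Ω → E) × Ω)) : ℝ≥0∞ :=
  if h : ∃ S ∈ 𝒳, Rep P X S G then ∫⁻ ω, μ h.choose ω ∂P else 0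

section

variable {Ω E : Type*} {mΩ : MeasurableSpace Ω} {P : Measure Ω}
    [IsProbabilityMeasure P] {X : Set (Ω → E)}
    {𝒳 : Set (CondRaw Ω E)} {μ : CondRaw Ω E → Ω → ℝ≥0∞}

theorem Rep.ceq {S T : CondRaw Ω E} (hS : IsCond P X S) (hT : IsCond P X T)
    {G : Set ((Ω → E) × Ω)} (h1 : Rep P X S G) (h2 : Rep P X T G) : ceq P S T := by
  rw [ceq_iff hS hT]
  intro x hx
  filter_upwards [h1 x hx, h2 x hx] with ω h3 h4
  rw [← h3, h4]

theorem ringFun_eq (hring : IsStableRing P X 𝒳) (hμ : IsStableMeasureOn P X 𝒳 μ)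
    {S : CondRaw Ω E} (hS : S ∈ 𝒳) {G : Set ((Ω → E) × Ω)} (h : Rep P X S G) :
    ringFun P X 𝒳 μ G = ∫⁻ ω, μ S ω ∂P := by
  have hex : ∃ S ∈ 𝒳, Rep P X S G := ⟨S, hS, h⟩
  unfold ringFun
  rw [dif_pos hex]
  have hc := hex.choose_spec
  exact lintegral_congr_ae (hμ.1.2.1 _ hc.1 _ hS
    (Rep.ceq (hring.1.2.1 _ hc.1) (hring.1.2.1 _ hS) hc.2 h))

theorem exists_bot (hX : Stable P X) (hring : IsStableRing P X 𝒳) :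
    ∃ S ∈ 𝒳, ∀ x ∈ X, ∀ᵐ ω ∂P, ω ∉ indBase P S x := by
  obtain ⟨S, hS⟩ := hring.1.1
  have hSc := hring.1.2.1 S hS
  refine ⟨_, (hring.2 S hS S hS).1, fun x hx => ?_⟩
  filter_upwards [(cInf₂_spec hX hSc (ccompl_spec hX hSc).1).2 x hx,
    (ccompl_spec hX hSc).2 x hx] with ω h1 h2
  rw [h1, h2]
  exact fun h => h.2 h.1

theorem bot_zero (hring : IsStableRing P X 𝒳) (hμ : IsStableMeasureOn P X 𝒳 μ)
    {S : CondRaw Ω E} (hS : S ∈ 𝒳) (h : ∀ x ∈ X, ∀ᵐ ω ∂P, ω ∉ indBase P S x) :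
    μ S =ᵐ[P] 0 := by
  have hSc := hring.1.2.1 S hS
  obtain ⟨x, hx⟩ := hSc.1.1
  filter_upwards [hμ.2.1 S hS, h x (hSc.2.1 hx), ind_self hSc hx] with ω h1 h2 h3
  rw [h1, indicator_of_notMem fun h => h2 (h3 h)]
  rfl

theorem ring_isSetRing (hX : Stable P X) (hring : IsStableRing P X 𝒳) :
    IsSetRing (ringSets P X 𝒳) where
  empty_mem := by
    obtain ⟨S, hS, h⟩ := exists_bot hX hring
    refine ⟨S, hS, fun x hx => ?_⟩
    filter_upwards [h x hx] with ω h1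
    exact ⟨fun h => h.elim, fun h => (h1 h).elim⟩
  union_mem := by
    rintro G H ⟨S, hS, hG⟩ ⟨T, hT, hH⟩
    refine ⟨_, (hring.2 S hS T hT).2, fun x hx => ?_⟩
    filter_upwards [hG x hx, hH x hx,
      (cSup₂_spec hX (hring.1.2.1 S hS) (hring.1.2.1 T hT)).2 x hx] with ω h1 h2 h3
    rw [h3, mem_union, h1, h2]
  sdiff_mem := by
    rintro G H ⟨S, hS, hG⟩ ⟨T, hT, hH⟩
    have hTc := hring.1.2.1 T hT
    refine ⟨_, (hring.2 S hS T hT).1, fun x hx => ?_⟩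
    filter_upwards [hG x hx, hH x hx,
      (cInf₂_spec hX (hring.1.2.1 S hS) (ccompl_spec hX hTc).1).2 x hx,
      (ccompl_spec hX hTc).2 x hx] with ω h1 h2 h3 h4
    rw [h3, h4, Set.mem_sdiff, h1, h2]

theorem ringFun_empty (hX : Stable P X) (hring : IsStableRing P X 𝒳)
    (hμ : IsStableMeasureOn P X 𝒳 μ) : ringFun P X 𝒳 μ ∅ = 0 := by
  obtain ⟨S, hS, h⟩ := exists_bot hX hring
  rw [ringFun_eq hring hμ hS, lintegral_congr_ae (bot_zero hring hμ hS h)]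
  · simp
  · intro x hx
    filter_upwards [h x hx] with ω h1
    exact ⟨fun h => h.elim, fun h => (h1 h).elim⟩

theorem ringFun_iUnion (hX : Stable P X) (hring : IsStableRing P X 𝒳)
    (hμ : IsStableMeasureOn P X 𝒳 μ) (f : ℕ → Set ((Ω → E) × Ω))
    (hf : ∀ i, f i ∈ ringSets P X 𝒳) (hU : (⋃ i, f i) ∈ ringSets P X 𝒳)
    (hd : Pairwise (Function.onFun Disjoint f)) :
    ringFun P X 𝒳 μ (⋃ i, f i) = ∑' i, ringFun P X 𝒳 μ (f i) := by
  choose S hS hSf using hf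
  obtain ⟨T, hT, hTU⟩ := hU
  have hSc := fun i => hring.1.2.1 _ (hS i)
  have hTc := hring.1.2.1 T hT
  have hsup := cSup_spec hX S hSc
  have hrep : Rep P X (cSupFam P X S) (⋃ i, f i) := by
    intro x hx
    filter_upwards [hsup.2 x hx, ae_all_iff.2 fun i => hSf i x hx] with ω h1 h2
    rw [cSupFam, h1, mem_iUnion]
    exact exists_congr h2
  have hmem : cSupFam P X S ∈ 𝒳 :=
    hring.1.2.2.1 T hT _ hsup.1 (Rep.ceq hTc hsup.1 hTU hrep)
  have hdis : ∀ i j, i ≠ j → cdisjoint P X (S i) (S j) := by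
    intro i j hij
    rw [cdisjoint_iff hX (hSc i) (hSc j)]
    intro x hx
    filter_upwards [hSf i x hx, hSf j x hx] with ω h1 h2
    rw [← h1, ← h2]
    exact fun h => Set.disjoint_left.1 (hd hij) h.1 h.2
  rw [ringFun_eq hring hμ hmem hrep, lintegral_congr_ae (hμ.2.2 S hS hdis hmem),
    lintegral_tsum fun i => (hμ.1.1 _ (hS i)).aemeasurable]
  congr 1
  ext i
  rw [ringFun_eq hring hμ (hS i) (hSf i)]

theorem ringFun_union (hX : Stable P X) (hring : IsStableRing P X 𝒳)
    (hμ : IsStableMeasureOn P X 𝒳 μ) {s t : Set ((Ω → E) × Ω)}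
    (hs : s ∈ ringSets P X 𝒳) (ht : t ∈ ringSets P X 𝒳) (hd : Disjoint s t) :
    ringFun P X 𝒳 μ (s ∪ t) = ringFun P X 𝒳 μ s + ringFun P X 𝒳 μ t := by
  have hR := ring_isSetRing hX hring
  let f : ℕ → Set ((Ω → E) × Ω) := fun n => match n with
    | 0 => s
    | 1 => t
    | _ + 2 => ∅
  have hU : (⋃ i, f i) = s ∪ t := by
    ext p
    rw [mem_iUnion]
    constructor
    · rintro ⟨_ | _ | n, h⟩
      · exact Or.inl h
      · exact Or.inr h
      · exact h.elim
    · rintro (h | h)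
      · exact ⟨0, h⟩
      · exact ⟨1, h⟩
  have hf : ∀ i, f i ∈ ringSets P X 𝒳 := by
    rintro (_ | _ | n)
    · exact hs
    · exact ht
    · exact hR.empty_mem
  have hdf : Pairwise (Function.onFun Disjoint f) := by
    rintro (_ | _ | i) (_ | _ | j) hij
    · exact absurd rfl hij
    · exact hd
    · exact disjoint_bot_right
    · exact hd.symm
    · exact absurd rfl hij
    · exact disjoint_bot_right
    · exact disjoint_bot_left
    · exact disjoint_bot_left
    · exact disjoint_bot_left
  have := ringFun_iUnion hX hring hμ f hf (by rw [hU]; exact hR.union_mem hs ht) hdf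
  rw [hU] at this
  rw [this, tsum_eq_sum (s := Finset.range 2)]
  · simp [Finset.sum_range_succ, f]
  · rintro (_ | _ | n) hn
    · simp at hn
    · simp at hn
    · exact ringFun_empty hX hring hμ

theorem ring_restrict (hX : Stable P X) (hring : IsStableRing P X 𝒳)
    (hμ : IsStableMeasureOn P X 𝒳 μ) {S : CondRaw Ω E} (hS : S ∈ 𝒳)
    {G : Set ((Ω → E) × Ω)} (hG : Rep P X S G) {A : Set Ω} (hA : MeasurableSet A) :
    G ∩ Prod.snd ⁻¹' A ∈ ringSets P X 𝒳 ∧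
      ringFun P X 𝒳 μ (G ∩ Prod.snd ⁻¹' A) = ∫⁻ ω in A, μ S ω ∂P := by
  obtain ⟨B, hB, hBn⟩ := exists_bot hX hring
  let T : ℕ → CondRaw Ω E := fun n => match n with
    | 0 => S
    | _ + 1 => B
  have hT : ∀ k, T k ∈ 𝒳 := by
    rintro (_ | n)
    · exact hS
    · exact hB
  have hTc := fun k => hring.1.2.1 _ (hT k)
  have hmem := hring.1.2.2.2 (twoPart P A hA) T hT
  have hrep : Rep P X (condConcat P (twoPart P A hA) T) (G ∩ Prod.snd ⁻¹' A) := by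
    intro x hx
    filter_upwards [(condConcat_spec hX (twoPart P A hA) T hTc).2 x hx, hG x hx, hBn x hx]
      with ω h1 h2 h3
    rw [h1, mem_inter_iff, h2]
    constructor
    · rintro ⟨h4, h5⟩
      exact ⟨0, h5, h4⟩
    · rintro ⟨_ | k, h4, h5⟩
      · exact ⟨h5, h4⟩
      · exact (h3 h5).elim
  refine ⟨⟨_, hmem, hrep⟩, ?_⟩
  rw [ringFun_eq hring hμ hmem hrep, ← lintegral_indicator hA]
  refine lintegral_congr_ae ?_
  filter_upwards [hμ.1.2.2 (twoPart P A hA) T hT,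
    (twoPart P A hA).concat_ae fun k => μ (T k), bot_zero hring hμ hB hBn] with ω h1 h2 h3
  rw [h1]
  by_cases h : ω ∈ A
  · rw [h2 0 h, indicator_of_mem h]
  · rw [h2 1 h, indicator_of_notMem h]
    exact h3

theorem exists_measure (hX : Stable P X) (hring : IsStableRing P X 𝒳)
    (hμ : IsStableMeasureOn P X 𝒳 μ) :
    ∃ (mC : MeasurableSpace ((Ω → E) × Ω)) (M : @Measure _ mC),
      (∀ G ∈ ringSets P X 𝒳, MeasurableSet[mC] G ∧ M G = ringFun P X 𝒳 μ G) ∧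
      ∀ A : Set Ω, MeasurableSet A → MeasurableSet[mC] (Prod.snd ⁻¹' A) := by
  have hR := ring_isSetRing hX hring
  let m : AddContent ℝ≥0∞ (ringSets P X 𝒳) := hR.addContent_of_union (ringFun P X 𝒳 μ)
    (ringFun_empty hX hring hμ) (fun hs ht hd => ringFun_union hX hring hμ hs ht hd)
  have hm : ∀ G, m G = ringFun P X 𝒳 μ G := fun _ => rfl
  have hsub : m.IsSigmaSubadditive := isSigmaSubadditive_of_addContent_iUnion_eq_tsum hR
    (fun f hf hU hd => ringFun_iUnion hX hring hμ f hf hU hd)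
  refine ⟨_, m.measureCaratheodory hR.isSetSemiring hsub, fun G hG => ⟨?_, ?_⟩, fun A hA => ?_⟩
  · exact m.isCaratheodory_inducedOuterMeasure_of_mem hR.isSetSemiring hG
  · exact m.measureCaratheodory_eq hR.isSetSemiring hsub hG
  · unfold inducedOuterMeasure
    apply OuterMeasure.ofFunction_caratheodory
    intro t
    by_cases ht : t ∈ ringSets P X 𝒳
    · have ht' := ht
      obtain ⟨S, hS, hSt⟩ := ht'
      have h1 := ring_restrict hX hring hμ hS hSt hA
      have h2 : t \ Prod.snd ⁻¹' A ∈ ringSets P X 𝒳 := by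
        rw [← Set.sdiff_self_inter]
        exact hR.sdiff_mem ht h1.1
      rw [extend_eq (P := fun s => s ∈ ringSets P X 𝒳) _ h1.1,
        extend_eq (P := fun s => s ∈ ringSets P X 𝒳) _ h2,
        extend_eq (P := fun s => s ∈ ringSets P X 𝒳) _ ht, hm, hm, hm,
        ← ringFun_union hX hring hμ h1.1 h2 (disjoint_sdiff_inter.symm), inter_union_sdiff]
    · have : extend (P := fun s => s ∈ ringSets P X 𝒳) (fun x _ => m x) t = ⊤ := by
        unfold extend
        simp [ht]
      exact le_top.trans_eq this.symm

end

/-- The conditional subsets with Carathéodory-measurable graph. -/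
def goodColl {Ω E : Type*} {mΩ : MeasurableSpace Ω} (P : Measure Ω) (X : Set (Ω → E))
    (mC : MeasurableSpace ((Ω → E) × Ω)) : Set (CondRaw Ω E) :=
  {S | IsCond P X S ∧ MeasurableSet[mC] (grSet P S)}

section

variable {Ω E : Type*} {mΩ : MeasurableSpace Ω} {P : Measure Ω}
    [IsProbabilityMeasure P] {X : Set (Ω → E)}
    {mC : MeasurableSpace ((Ω → E) × Ω)} {M : Measure ((Ω → E) × Ω)}

theorem meas_congr
    (hnull : ∀ H : Set ((Ω → E) × Ω), (∀ x ∈ X, ∀ᵐ ω ∂P, (x, ω) ∉ H) →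
      MeasurableSet H ∧ M H = 0) {G H : Set ((Ω → E) × Ω)} (hG : MeasurableSet G)
    (h : ∀ x ∈ X, ∀ᵐ ω ∂P, (x, ω) ∈ G ↔ (x, ω) ∈ H) : MeasurableSet H := by
  have h1 := (hnull (G \ H) fun x hx => (h x hx).mono fun ω h h' => h'.2 (h.1 h'.1)).1
  have h2 := (hnull (H \ G) fun x hx => (h x hx).mono fun ω h h' => h'.2 (h.2 h'.1)).1
  have : H = (G \ (G \ H)) ∪ (H \ G) := by
    ext p
    simp only [mem_union, Set.mem_sdiff]
    tauto
  rw [this]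
  exact (hG.diff h1).union h2

theorem measure_congr'
    (hnull : ∀ H : Set ((Ω → E) × Ω), (∀ x ∈ X, ∀ᵐ ω ∂P, (x, ω) ∉ H) →
      MeasurableSet H ∧ M H = 0) {G H : Set ((Ω → E) × Ω)}
    (h : ∀ x ∈ X, ∀ᵐ ω ∂P, (x, ω) ∈ G ↔ (x, ω) ∈ H) : M G = M H := by
  have h1 := (hnull (G \ H) fun x hx => (h x hx).mono fun ω h h' => h'.2 (h.1 h'.1)).2
  have h2 := (hnull (H \ G) fun x hx => (h x hx).mono fun ω h h' => h'.2 (h.2 h'.1)).2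
  exact measure_congr (ae_eq_set.2 ⟨h1, h2⟩)

theorem goodColl_sigma (hX : Stable P X)
    (hnull : ∀ H : Set ((Ω → E) × Ω), (∀ x ∈ X, ∀ᵐ ω ∂P, (x, ω) ∉ H) →
      MeasurableSet H ∧ M H = 0)
    (hsnd : ∀ A : Set Ω, MeasurableSet A → MeasurableSet[mC] (Prod.snd ⁻¹' A)) :
    IsStableSigma P X (goodColl P X mC) := by
  have htop : ctop X ∈ goodColl P X mC := by
    refine ⟨ctop_cond hX, meas_congr hnull MeasurableSet.univ fun x hx => ?_⟩
    filter_upwards [ctop_spec hX hx] with ω h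
    exact ⟨fun _ => h, fun _ => mem_univ _⟩
  refine ⟨⟨⟨_, htop⟩, fun S hS => hS.1, ?_, ?_⟩, htop, ?_, ?_⟩
  · intro S hS T hT hST
    exact ⟨hT, meas_congr hnull hS.2 ((ceq_iff hS.1 hT).1 hST)⟩
  · intro A S hS
    have hcc := condConcat_spec hX A S fun k => (hS k).1
    refine ⟨hcc.1, meas_congr hnull (G := ⋃ k, Prod.snd ⁻¹' (A.part k) ∩ grSet P (S k))
      (MeasurableSet.iUnion fun k => (hsnd _ (A.meas k)).inter (hS k).2) fun x hx => ?_⟩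
    filter_upwards [hcc.2 x hx] with ω h
    rw [mem_iUnion]
    exact h.symm
  · intro S hS
    have hcc := ccompl_spec hX hS.1
    refine ⟨hcc.1, meas_congr hnull hS.2.compl fun x hx => ?_⟩
    filter_upwards [hcc.2 x hx] with ω h
    exact h.symm
  · intro S hS
    have hcc := cSup_spec hX S fun k => (hS k).1
    refine ⟨hcc.1, meas_congr hnull (MeasurableSet.iUnion fun k => (hS k).2) fun x hx => ?_⟩
    filter_upwards [hcc.2 x hx] with ω h
    rw [mem_iUnion]
    exact h.symm

theorem ae_eq_on {f g : Ω → ℝ≥0∞} (hf : Measurable f) (hg : Measurable g) {A : Set Ω}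
    (hA : MeasurableSet A)
    (h : ∀ B, MeasurableSet B → ∫⁻ ω in B ∩ A, f ω ∂P = ∫⁻ ω in B ∩ A, g ω ∂P) :
    ∀ᵐ ω ∂P, ω ∈ A → f ω = g ω := by
  have : f =ᵐ[P.restrict A] g := by
    refine ae_eq_of_forall_setLIntegral_eq_of_sigmaFinite hf hg fun s hs _ => ?_
    rw [Measure.restrict_restrict hs]
    exact h s hs
  exact (ae_restrict_iff' hA).1 this

theorem exists_nu (hX : Stable P X)
    (hnull : ∀ H : Set ((Ω → E) × Ω), (∀ x ∈ X, ∀ᵐ ω ∂P, (x, ω) ∉ H) →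
      MeasurableSet H ∧ M H = 0)
    (hsnd : ∀ A : Set Ω, MeasurableSet A → MeasurableSet[mC] (Prod.snd ⁻¹' A)) :
    ∃ ν : CondRaw Ω E → Ω → ℝ≥0∞, IsStableMeasureOn P X (goodColl P X mC) ν ∧
      ∀ S ∈ goodColl P X mC, ∀ A : Set Ω, MeasurableSet A →
        ∫⁻ ω in A, ν S ω ∂P = M (grSet P S ∩ Prod.snd ⁻¹' A) := by
  have hsm : Measurable (Prod.snd : (Ω → E) × Ω → Ω) := fun A hA => hsnd A hA
  let ν : CondRaw Ω E → Ω → ℝ≥0∞ := fun S =>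
    ((M.restrict (grSet P S)).map Prod.snd).rnDeriv P
  have hνm : ∀ S, Measurable (ν S) := fun S => Measure.measurable_rnDeriv _ _
  have hν : ∀ S ∈ goodColl P X mC, ∀ A : Set Ω, MeasurableSet A →
        ∫⁻ ω in A, ν S ω ∂P = M (grSet P S ∩ Prod.snd ⁻¹' A) := by
    intro S hS A hA
    have happ : ∀ B : Set Ω, MeasurableSet B → ((M.restrict (grSet P S)).map Prod.snd) B =
        M (grSet P S ∩ Prod.snd ⁻¹' B) := by
      intro B hB
      rw [Measure.map_apply hsm hB, Measure.restrict_apply (hsnd B hB), inter_comm]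
    have hac : ((M.restrict (grSet P S)).map Prod.snd) ≪ P := by
      refine Measure.AbsolutelyContinuous.mk fun B hB h0 => ?_
      rw [happ B hB]
      refine (hnull _ fun x _ => ?_).2
      filter_upwards [measure_eq_zero_iff_ae_notMem.1 h0] with ω h1 h2
      exact h1 h2.2
    haveI : SFinite ((M.restrict (grSet P S)).map Prod.snd) := sFinite_of_absolutelyContinuous hac
    rw [← withDensity_apply _ hA, Measure.withDensity_rnDeriv_eq _ _ hac, happ A hA]
  have hsig := goodColl_sigma hX hnull hsnd
  refine ⟨ν, ⟨⟨fun S _ => hνm S, ?_, ?_⟩, ?_, ?_⟩, hν⟩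
  · intro S hS T hT hST
    have := ae_eq_on (P := P) (hνm S) (hνm T) MeasurableSet.univ (fun B hB => by
      rw [inter_univ, hν S hS B hB, hν T hT B hB]
      refine measure_congr' hnull fun x hx => ?_
      filter_upwards [(ceq_iff hS.1 hT.1).1 hST x hx] with ω h
      exact and_congr_left' h)
    filter_upwards [this] with ω h
    exact h (mem_univ _)
  · intro A S hS
    have hccm := hsig.1.2.2.2 A S hS
    have hcc := condConcat_spec hX A S fun k => (hS k).1
    have h1 : ∀ k, ∀ᵐ ω ∂P, ω ∈ A.part k → ν (condConcat P A S) ω = ν (S k) ω := by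
      intro k
      refine ae_eq_on (hνm _) (hνm _) (A.meas k) fun B hB => ?_
      rw [hν _ hccm _ (hB.inter (A.meas k)), hν _ (hS k) _ (hB.inter (A.meas k))]
      refine measure_congr' hnull fun x hx => ?_
      filter_upwards [hcc.2 x hx, A.unique_ae] with ω h2 h3
      refine and_congr_left fun h4 => ?_
      refine Iff.trans h2 ⟨?_, fun h => ⟨k, h4.2, h⟩⟩
      rintro ⟨j, hj, hjx⟩
      rw [h3 k j h4.2 hj]
      exact hjx
    filter_upwards [ae_all_iff.2 h1, A.cover_ae, A.concat_ae fun k => ν (S k)] with ω h2 h3 h4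
    obtain ⟨k, hk⟩ := h3
    rw [h2 k hk, h4 k hk]
  · intro S hS
    have := ae_eq_on (P := P) (hνm S) (g := fun _ => 0) measurable_const hS.1.2.2.compl
      (fun B hB => by
        rw [hν S hS _ (hB.inter hS.1.2.2.compl), lintegral_zero]
        refine (hnull _ fun x hx => ?_).2
        filter_upwards [ind_base hS.1 x] with ω h1 h2
        exact h2.2.2 (h1 h2.1))
    filter_upwards [this] with ω h
    by_cases hω : ω ∈ S.2
    · rw [indicator_of_mem hω]
    · rw [indicator_of_notMem hω, h hω]
  · intro S hS hd hsup
    have hsp := cSup_spec hX S fun k => (hS k).1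
    refine ae_eq_of_forall_setLIntegral_eq_of_sigmaFinite (hνm _)
      (Measurable.ennreal_tsum fun k => hνm (S k)) fun B hB _ => ?_
    rw [hν _ hsup B hB, lintegral_tsum fun k => (hνm (S k)).aemeasurable]
    have h1 : M (grSet P (cSupFam P X S) ∩ Prod.snd ⁻¹' B) =
        M (⋃ k, grSet P (S k) ∩ Prod.snd ⁻¹' B) := by
      refine measure_congr' hnull fun x hx => ?_
      filter_upwards [hsp.2 x hx] with ω h
      rw [← iUnion_inter]
      refine and_congr_left fun _ => ?_
      rw [mem_iUnion]
      exact h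
    rw [h1, measure_iUnion₀]
    · congr 1
      ext k
      rw [hν _ (hS k) B hB]
    · intro i j hij
      refine (hnull _ fun x hx => ?_).2
      filter_upwards [(cdisjoint_iff hX (hS i).1 (hS j).1).1 (hd i j hij) x hx] with ω h1 h2
      exact h1 ⟨h2.1.1, h2.2.1⟩
    · intro k
      exact ((hS k).2.inter (hsnd B hB)).nullMeasurableSet

end

end Construction

/-- **Theorem 3.11 (conditional Carathéodory extension theorem).**  Every stable
pre-measure `μ` on a stable ring `𝒳` on a stable set `X` extends to a stable measure
`ν` on the stable σ-algebra `Σ(𝒳)` generated by `𝒳`. -/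
theorem stable_caratheodory_extension
    {Ω E : Type*} {mΩ : MeasurableSpace Ω} (P : @Measure Ω mΩ)
    [IsProbabilityMeasure P] (X : Set (Ω → E)) (hX : Stable P X)
    (𝒳 : Set (CondRaw Ω E)) (hring : IsStableRing P X 𝒳)
    (μ : CondRaw Ω E → Ω → ℝ≥0∞) (hμ : IsStableMeasureOn P X 𝒳 μ) :
    ∃ ν : CondRaw Ω E → Ω → ℝ≥0∞,
      IsStableMeasureOn P X (sigmaGen P X 𝒳) ν ∧ ∀ S ∈ 𝒳, ν S =ᵐ[P] μ S := by
  obtain ⟨mC, M, hM, hsnd⟩ := exists_measure hX hring hμ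
  have hnull : ∀ H : Set ((Ω → E) × Ω), (∀ x ∈ X, ∀ᵐ ω ∂P, (x, ω) ∉ H) →
      MeasurableSet H ∧ M H = 0 := by
    intro H hH
    obtain ⟨S, hS, hSb⟩ := exists_bot hX hring
    have hrep : Rep P X S H := by
      intro x hx
      filter_upwards [hH x hx, hSb x hx] with ω h1 h2
      exact ⟨fun h => (h1 h).elim, fun h => (h2 h).elim⟩
    obtain ⟨h1, h2⟩ := hM H ⟨S, hS, hrep⟩
    refine ⟨h1, ?_⟩
    rw [h2, ringFun_eq hring hμ hS hrep, lintegral_congr_ae (bot_zero hring hμ hS hSb)]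
    simp
  have hrepS : ∀ S : CondRaw Ω E, Rep P X S (grSet P S) := fun S x _ =>
    Eventually.of_forall fun ω => Iff.rfl
  have hsub : 𝒳 ⊆ goodColl P X mC := fun S hS =>
    ⟨hring.1.2.1 S hS, (hM _ ⟨S, hS, hrepS S⟩).1⟩
  have hle : sigmaGen P X 𝒳 ⊆ goodColl P X mC :=
    sInter_subset_of_mem ⟨goodColl_sigma hX hnull hsnd, hsub⟩
  obtain ⟨ν, ⟨⟨h1, h2, h3⟩, h4, h5⟩, hν⟩ := exists_nu hX hnull hsnd
  refine ⟨ν, ⟨⟨fun S hS => h1 S (hle hS), fun S hS T hT => h2 S (hle hS) T (hle hT),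
    fun A S hS => h3 A S fun k => hle (hS k)⟩, fun S hS => h4 S (hle hS),
    fun S hS hd hsup => h5 S (fun k => hle (hS k)) hd (hle hsup)⟩, fun S hS => ?_⟩
  refine ae_eq_of_forall_setLIntegral_eq_of_sigmaFinite (h1 S (hsub hS)) (hμ.1.1 S hS)
    fun B hB _ => ?_
  have hr := ring_restrict hX hring hμ hS (hrepS S) hB
  rw [hν S (hsub hS) B hB, (hM _ hr.1).2, hr.2]

end CondMT
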